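/- Every non-trivial 4-dimensional Hopf superalgebra over K whose even part has dimension 3 is isomorphic as a Hopf superalgebra to H₅ = K[x,y]/(x² + y² − 1, xy) with grading making x even and y odd (so A₀ = span{1, x, x²}, A₁ = span{y}), comultiplication Δ(x) = x ⊗ x − α y ⊗ y and Δ(y) = x ⊗ y + y ⊗ x, counit ε(x) = 1, ε(y) = 0, and antipode S(x) = x, S(y) = α y, where α ∈ K is a primitive fourth root of unity (α² = −1). -/

import Mathlib

open TensorProduct

section SuperDefs

variable (K A : Type*) [Field K] [Ring A] [Algebra K A]

/-- A superalgebra structure on the unital associative `K`-algebra `A`: a `ℤ/2ℤ`-grading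
`A = A₀ ⊕ A₁` of `K`-vector spaces with `1 ∈ A₀` and `Aᵢ · Aⱼ ⊆ A_{i+j mod 2}`. -/
structure SuperAlgebra where
  A₀ : Submodule K A
  A₁ : Submodule K A
  compl : IsCompl A₀ A₁
  one_mem : (1 : A) ∈ A₀
  mul_mem₀₀ : ∀ a ∈ A₀, ∀ b ∈ A₀, a * b ∈ A₀
  mul_mem₀₁ : ∀ a ∈ A₀, ∀ b ∈ A₁, a * b ∈ A₁
  mul_mem₁₀ : ∀ a ∈ A₁, ∀ b ∈ A₀, a * b ∈ A₁
  mul_mem₁₁ : ∀ a ∈ A₁, ∀ b ∈ A₁, a * b ∈ A₀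

namespace SuperAlgebra

variable {K A}

/-- The projection onto the even part along the odd part. -/
noncomputable def p₀ (S : SuperAlgebra K A) : A →ₗ[K] A :=
  S.A₀.subtype ∘ₗ Submodule.linearProjOfIsCompl S.A₀ S.A₁ S.compl

/-- The projection onto the odd part along the even part. -/
noncomputable def p₁ (S : SuperAlgebra K A) : A →ₗ[K] A :=
  S.A₁.subtype ∘ₗ Submodule.linearProjOfIsCompl S.A₁ S.A₀ S.compl.symm

/-- The superflip `τ : A ⊗ A → A ⊗ A`, `a ⊗ b ↦ (-1)^{|a||b|} b ⊗ a` on homogeneous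
elements. -/
noncomputable def τ (S : SuperAlgebra K A) : A ⊗[K] A →ₗ[K] A ⊗[K] A :=
  (TensorProduct.comm K A A).toLinearMap ∘ₗ
    (TensorProduct.map S.p₀ S.p₀ + TensorProduct.map S.p₀ S.p₁ +
      TensorProduct.map S.p₁ S.p₀ - TensorProduct.map S.p₁ S.p₁)

variable (K A) in
/-- Regrouping `(A ⊗ A) ⊗ (A ⊗ A) ≃ A ⊗ ((A ⊗ A) ⊗ A)`. -/
noncomputable def rearr : ((A ⊗[K] A) ⊗[K] (A ⊗[K] A)) ≃ₗ[K] (A ⊗[K] ((A ⊗[K] A) ⊗[K] A)) :=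
  (TensorProduct.assoc K A A (A ⊗[K] A)) ≪≫ₗ
    TensorProduct.congr (LinearEquiv.refl K A) (TensorProduct.assoc K A A A).symm

/-- The map `(μ ⊗ μ) ∘ (id ⊗ τ ⊗ id) : (A ⊗ A) ⊗ (A ⊗ A) → A ⊗ A`, i.e. the super
multiplication of `A ⊗ A`. -/
noncomputable def superBimul (S : SuperAlgebra K A) :
    ((A ⊗[K] A) ⊗[K] (A ⊗[K] A)) →ₗ[K] A ⊗[K] A :=
  TensorProduct.map (LinearMap.mul' K A) (LinearMap.mul' K A) ∘ₗ
    (rearr K A).symm.toLinearMap ∘ₗ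
    TensorProduct.map (LinearMap.id : A →ₗ[K] A)
      (TensorProduct.map S.τ (LinearMap.id : A →ₗ[K] A)) ∘ₗ
    (rearr K A).toLinearMap

/-- The even part of `A ⊗ A` for the total grading. -/
def evenTensor (S : SuperAlgebra K A) : Submodule K (A ⊗[K] A) :=
  LinearMap.range (TensorProduct.map S.A₀.subtype S.A₀.subtype) ⊔
    LinearMap.range (TensorProduct.map S.A₁.subtype S.A₁.subtype)

/-- The odd part of `A ⊗ A` for the total grading. -/
def oddTensor (S : SuperAlgebra K A) : Submodule K (A ⊗[K] A) :=
  LinearMap.range (TensorProduct.map S.A₀.subtype S.A₁.subtype) ⊔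
    LinearMap.range (TensorProduct.map S.A₁.subtype S.A₀.subtype)

end SuperAlgebra

/-- A superbialgebra over `K`: a superalgebra together with grading-preserving linear maps
`Δ : A → A ⊗ A` and `ε : A → K` satisfying coassociativity, counity, and compatibility
with the (super)algebra structure. -/
structure SuperBialgebra extends SuperAlgebra K A where
  Δ : A →ₗ[K] A ⊗[K] A
  ε : A →ₗ[K] K
  Δ_even : ∀ a ∈ A₀, Δ a ∈ toSuperAlgebra.evenTensor
  Δ_odd : ∀ a ∈ A₁, Δ a ∈ toSuperAlgebra.oddTensor
  ε_odd : ∀ a ∈ A₁, ε a = 0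
  coassoc : ∀ a : A,
    TensorProduct.assoc K A A A (TensorProduct.map Δ (LinearMap.id : A →ₗ[K] A) (Δ a)) =
      TensorProduct.map (LinearMap.id : A →ₗ[K] A) Δ (Δ a)
  counit_left : ∀ a : A,
    TensorProduct.lid K A (TensorProduct.map ε (LinearMap.id : A →ₗ[K] A) (Δ a)) = a
  counit_right : ∀ a : A,
    TensorProduct.rid K A (TensorProduct.map (LinearMap.id : A →ₗ[K] A) ε (Δ a)) = a
  Δ_one : Δ 1 = 1 ⊗ₜ[K] 1
  ε_one : ε 1 = 1
  ε_mul : ∀ a b : A, ε (a * b) = ε a * ε b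
  Δ_mul : ∀ a b : A, Δ (a * b) = toSuperAlgebra.superBimul (Δ a ⊗ₜ[K] Δ b)

/-- A Hopf superalgebra: a superbialgebra with a grading-preserving antipode `S`
satisfying `μ ∘ (S ⊗ id) ∘ Δ = μ ∘ (id ⊗ S) ∘ Δ = η ∘ ε`. -/
structure HopfSuperalgebra extends SuperBialgebra K A where
  antipode : A →ₗ[K] A
  antipode_even : ∀ a ∈ A₀, antipode a ∈ A₀
  antipode_odd : ∀ a ∈ A₁, antipode a ∈ A₁
  antipode_left : ∀ a : A,
    LinearMap.mul' K A (TensorProduct.map antipode (LinearMap.id : A →ₗ[K] A) (Δ a)) =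
      algebraMap K A (ε a)
  antipode_right : ∀ a : A,
    LinearMap.mul' K A (TensorProduct.map (LinearMap.id : A →ₗ[K] A) antipode (Δ a)) =
      algebraMap K A (ε a)

end SuperDefs

/-!
Let `y` span the odd part. Then `a y = χ(a) y` and `y a = ψ(a) y` for even `a`, and
`Δ y = g ⊗ y + y ⊗ h` with `g` and `h` even. Write `s(a)` for the coefficient of `y ⊗ y` in `Δ a`
and `S y = λ y`. The functional `χ ∘ S` is a convolution inverse of `χ` up to the `y ⊗ y` terms,
so that every even `a` decomposes as
`a = λ χ(y²) s(a) g + R (a₍₁₎ χ(a₍₂₎))`, where `R b = b₍₁₎ χ(S b₍₂₎)`.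

If `χ(y²) s` vanishes on the even part, then `g` is invertible, and comparing `Δ (a y)` with
`χ(a) Δ y` puts `a₍₁₎ χ(a₍₂₎)` in a plane, so the even part has dimension at most two. Otherwise
`y` can be scaled to make `χ(y²) = 1`; then `ψ = χ`, and the Koszul signs in `Δ (a y)` and
`Δ (y a)` force `χ(g) = χ(h) = 0`. Now the antipode gives `g² + y² = 1` and `S g = g`, the
decomposition gives `h = g` and the spanning set `1, g, g²`, and `α = -s(g)` is fixed by comparing
`Δ (g²)` with `Δ (1 - y²)`.
-/

section Slice

variable {R M N : Type*} [CommSemiring R] [AddCommMonoid M] [Module R M]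
  [AddCommMonoid N] [Module R N]

/-- The slice map `id ⊗ u : M ⊗ N → M` of a functional `u` on `N`. -/
noncomputable def rightSlice (u : N →ₗ[R] R) : M ⊗[R] N →ₗ[R] M :=
  (TensorProduct.rid R M).toLinearMap ∘ₗ u.lTensor M

/-- The slice map `u ⊗ id : M ⊗ N → N` of a functional `u` on `M`. -/
noncomputable def leftSlice (u : M →ₗ[R] R) : M ⊗[R] N →ₗ[R] N :=
  (TensorProduct.lid R N).toLinearMap ∘ₗ u.rTensor N

@[simp]
theorem rightSlice_tmul (u : N →ₗ[R] R) (m : M) (n : N) :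
    rightSlice u (m ⊗ₜ[R] n) = u n • m := by
  simp [rightSlice]

@[simp]
theorem leftSlice_tmul (u : M →ₗ[R] R) (m : M) (n : N) :
    leftSlice u (m ⊗ₜ[R] n) = u m • n := by
  simp [leftSlice]

end Slice

section OneDimensionalOddPart

variable {K A : Type*} [Field K] [Ring A] [Algebra K A]

namespace SuperAlgebra

variable (S : SuperAlgebra K A) {a b c d : A}

theorem p₀_of_mem_A₀ (ha : a ∈ S.A₀) : S.p₀ a = a :=
  congrArg Subtype.val (Submodule.projectionOnto_apply_of_mem_left S.compl ha)

theorem p₀_of_mem_A₁ (ha : a ∈ S.A₁) : S.p₀ a = 0 :=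
  congrArg Subtype.val (Submodule.projectionOnto_apply_of_mem_right S.compl ha)

theorem p₁_of_mem_A₁ (ha : a ∈ S.A₁) : S.p₁ a = a :=
  congrArg Subtype.val (Submodule.projectionOnto_apply_of_mem_left S.compl.symm ha)

theorem p₁_of_mem_A₀ (ha : a ∈ S.A₀) : S.p₁ a = 0 :=
  congrArg Subtype.val (Submodule.projectionOnto_apply_of_mem_right S.compl.symm ha)

theorem p₀_add_p₁ (a : A) : S.p₀ a + S.p₁ a = a :=
  Submodule.projection_add_projection_eq_self S.compl a

variable {S}

theorem linearMap_ext {M : Type*} [AddCommGroup M] [Module K M] {φ ψ : A →ₗ[K] M}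
    (even : ∀ a ∈ S.A₀, φ a = ψ a) (odd : ∀ a ∈ S.A₁, φ a = ψ a) : φ = ψ := by
  ext a
  rw [← S.p₀_add_p₁ a, map_add, map_add, even (S.p₀ a) (Subtype.prop _),
    odd (S.p₁ a) (Subtype.prop _)]

theorem τ_tmul_of_left_mem_A₀ (hb : b ∈ S.A₀) (c : A) : S.τ (b ⊗ₜ[K] c) = c ⊗ₜ[K] b := by
  simp [τ, S.p₀_of_mem_A₀ hb, S.p₁_of_mem_A₀ hb, ← TensorProduct.add_tmul, S.p₀_add_p₁]

theorem τ_tmul_of_right_mem_A₀ (b : A) (hc : c ∈ S.A₀) : S.τ (b ⊗ₜ[K] c) = c ⊗ₜ[K] b := by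
  simp [τ, S.p₀_of_mem_A₀ hc, S.p₁_of_mem_A₀ hc, ← TensorProduct.tmul_add, S.p₀_add_p₁]

theorem τ_tmul_of_mem_A₁ (hb : b ∈ S.A₁) (hc : c ∈ S.A₁) :
    S.τ (b ⊗ₜ[K] c) = -(c ⊗ₜ[K] b) := by
  simp [τ, S.p₀_of_mem_A₁ hb, S.p₁_of_mem_A₁ hb, S.p₀_of_mem_A₁ hc, S.p₁_of_mem_A₁ hc]

theorem superBimul_tmul_of_left_mem_A₀ (a : A) (hb : b ∈ S.A₀) (c d : A) :
    S.superBimul ((a ⊗ₜ[K] b) ⊗ₜ[K] (c ⊗ₜ[K] d)) = (a * c) ⊗ₜ[K] (b * d) := by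
  simp [superBimul, rearr, τ_tmul_of_left_mem_A₀ hb]

theorem superBimul_tmul_of_right_mem_A₀ (a b : A) (hc : c ∈ S.A₀) (d : A) :
    S.superBimul ((a ⊗ₜ[K] b) ⊗ₜ[K] (c ⊗ₜ[K] d)) = (a * c) ⊗ₜ[K] (b * d) := by
  simp [superBimul, rearr, τ_tmul_of_right_mem_A₀ b hc]

theorem superBimul_tmul_of_mem_A₁ (a : A) (hb : b ∈ S.A₁) (hc : c ∈ S.A₁) (d : A) :
    S.superBimul ((a ⊗ₜ[K] b) ⊗ₜ[K] (c ⊗ₜ[K] d)) = -((a * c) ⊗ₜ[K] (b * d)) := by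
  simp [superBimul, rearr, τ_tmul_of_mem_A₁ hb hc, TensorProduct.neg_tmul,
    TensorProduct.tmul_neg]

variable (S) in
/-- `y` spans the odd part of `S`, and `f` is the coordinate along `y` that vanishes on the even
part. -/
structure IsOddBasis (y : A) (f : A →ₗ[K] K) : Prop where
  mem : y ∈ S.A₁
  coord_even : ∀ a ∈ S.A₀, f a = 0
  coord_self : f y = 1
  coord_smul : ∀ a ∈ S.A₁, f a • y = a

variable (S) in
theorem exists_isOddBasis (h₁ : Module.finrank K S.A₁ = 1) : ∃ y f, S.IsOddBasis y f := by
  let b := Module.basisUnique Unit h₁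
  refine ⟨b (), b.coord () ∘ₗ S.A₁.projectionOnto S.A₀ S.compl.symm, (b ()).2,
    fun a ha => ?_, ?_, fun a ha => ?_⟩
  · simp [Submodule.projectionOnto_apply_of_mem_right S.compl.symm ha]
  · simp
  · rw [LinearMap.comp_apply, Submodule.projectionOnto_apply_of_mem_left S.compl.symm ha]
    simpa using congrArg Subtype.val (b.sum_repr ⟨a, ha⟩)

/-- For `y` spanning the odd part with coordinate `f`, the functional `χ` such that
`a * y = χ a • y` for even `a`; it vanishes on odd elements. -/
noncomputable def leftCharacter (y : A) (f : A →ₗ[K] K) : A →ₗ[K] K :=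
  f ∘ₗ LinearMap.mulRight K y

/-- For `y` spanning the odd part with coordinate `f`, the functional `ψ` such that
`y * a = ψ a • y` for even `a`; it vanishes on odd elements. -/
noncomputable def rightCharacter (y : A) (f : A →ₗ[K] K) : A →ₗ[K] K :=
  f ∘ₗ LinearMap.mulLeft K y

namespace IsOddBasis

variable {y : A} {f : A →ₗ[K] K}

local notation "χ" => leftCharacter y f
local notation "ψ" => rightCharacter y f

theorem A₁_eq_span (F : S.IsOddBasis y f) : S.A₁ = K ∙ y :=
  le_antisymm
    (fun a ha => Submodule.mem_span_singleton.2 ⟨f a, F.coord_smul a ha⟩)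
    ((Submodule.span_singleton_le_iff_mem _ _).2 F.mem)

theorem smul_right_cancel (F : S.IsOddBasis y f) {r t : K} (h : r • y = t • y) : r = t := by
  simpa [F.coord_self] using congrArg f h

theorem sq_mem (F : S.IsOddBasis y f) : y * y ∈ S.A₀ := S.mul_mem₁₁ _ F.mem _ F.mem

theorem mul_gen (F : S.IsOddBasis y f) (ha : a ∈ S.A₀) : a * y = χ a • y :=
  (F.coord_smul _ (S.mul_mem₀₁ _ ha _ F.mem)).symm

theorem gen_mul (F : S.IsOddBasis y f) (ha : a ∈ S.A₀) : y * a = ψ a • y :=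
  (F.coord_smul _ (S.mul_mem₁₀ _ F.mem _ ha)).symm

theorem mul_sq (F : S.IsOddBasis y f) (ha : a ∈ S.A₀) : a * (y * y) = χ a • (y * y) := by
  rw [← mul_assoc, F.mul_gen ha, smul_mul_assoc]

theorem sq_mul (F : S.IsOddBasis y f) (ha : a ∈ S.A₀) : y * y * a = ψ a • (y * y) := by
  rw [mul_assoc, F.gen_mul ha, mul_smul_comm]

theorem leftCharacter_odd (F : S.IsOddBasis y f) (ha : a ∈ S.A₁) : χ a = 0 :=
  F.coord_even _ (S.mul_mem₁₁ _ ha _ F.mem)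

theorem rightCharacter_odd (F : S.IsOddBasis y f) (ha : a ∈ S.A₁) : ψ a = 0 :=
  F.coord_even _ (S.mul_mem₁₁ _ F.mem _ ha)

theorem leftCharacter_one (F : S.IsOddBasis y f) : χ 1 = 1 := by
  simp [leftCharacter, F.coord_self]

theorem leftCharacter_mul (F : S.IsOddBasis y f) (ha : a ∈ S.A₀) (hb : b ∈ S.A₀) :
    χ (a * b) = χ a * χ b := by
  apply F.smul_right_cancel
  rw [← F.mul_gen (S.mul_mem₀₀ _ ha _ hb), mul_assoc, F.mul_gen hb, mul_smul_comm, F.mul_gen ha,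
    smul_smul, mul_comm]

/-- Both characters can be read off the product `y² a y²`. -/
theorem rightCharacter_eq_leftCharacter (F : S.IsOddBasis y f) (hk : χ (y * y) ≠ 0) :
    ψ = χ := by
  refine linearMap_ext (S := S) (fun a ha => ?_) fun a ha => by
    rw [F.leftCharacter_odd ha, F.rightCharacter_odd ha]
  have h : ψ a • (y * y * (y * y)) = χ a • (y * y * (y * y)) := by
    rw [← smul_mul_assoc, ← F.sq_mul ha, mul_assoc, F.mul_sq ha, mul_smul_comm]
  have hχ := congrArg χ h
  simpa only [map_smul, F.leftCharacter_mul F.sq_mem F.sq_mem, smul_eq_mul, mul_eq_mul_right_iff,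
    mul_self_eq_zero, hk, or_false] using hχ

theorem exists_leftCharacter_sq_eq_one (F : S.IsOddBasis y f) (hk : χ (y * y) ≠ 0)
    (hsq : IsSquare (χ (y * y))) :
    ∃ z e, S.IsOddBasis z e ∧ leftCharacter z e (z * z) = 1 := by
  obtain ⟨m, hm⟩ := hsq
  have hm0 : m ≠ 0 := fun h => hk (by rw [hm, h, zero_mul])
  refine ⟨m⁻¹ • y, m • f, ⟨S.A₁.smul_mem _ F.mem, fun a ha => ?_, ?_, fun a ha => ?_⟩, ?_⟩
  · simp [F.coord_even a ha]
  · simp [F.coord_self, hm0]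
  · simp [smul_smul, mul_right_comm, hm0, F.coord_smul a ha]
  · have hf : f (y * y * y) = m * m := hm
    simp [leftCharacter, hf]
    field_simp

@[elab_as_elim]
theorem evenTensor_induction (F : S.IsOddBasis y f) {P : A ⊗[K] A → Prop}
    (even : ∀ a ∈ S.A₀, ∀ b ∈ S.A₀, P (a ⊗ₜ[K] b)) (odd : ∀ r : K, P (r • y ⊗ₜ[K] y))
    (add : ∀ T U, P T → P U → P (T + U)) {T : A ⊗[K] A} (hT : T ∈ S.evenTensor) : P T := by
  obtain ⟨_, ⟨U, rfl⟩, _, ⟨V, rfl⟩, rfl⟩ := Submodule.mem_sup.1 hT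
  clear hT
  apply add
  · induction U with
    | zero => simpa using even 0 (zero_mem _) 0 (zero_mem _)
    | tmul a b => exact even a a.2 b b.2
    | add V W hV hW => simpa only [map_add] using add _ _ hV hW
  · induction V with
    | zero => simpa using odd 0
    | tmul a b =>
      rw [TensorProduct.map_tmul, Submodule.subtype_apply, Submodule.subtype_apply,
        ← F.coord_smul a a.2, ← F.coord_smul b b.2, TensorProduct.smul_tmul_smul]
      exact odd _
    | add V W hV hW => simpa only [map_add] using add _ _ hV hW

@[elab_as_elim]
theorem oddTensor_induction (F : S.IsOddBasis y f) {P : A ⊗[K] A → Prop}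
    (right : ∀ a ∈ S.A₀, P (a ⊗ₜ[K] y)) (left : ∀ a ∈ S.A₀, P (y ⊗ₜ[K] a))
    (add : ∀ T U, P T → P U → P (T + U)) {T : A ⊗[K] A} (hT : T ∈ S.oddTensor) : P T := by
  obtain ⟨_, ⟨U, rfl⟩, _, ⟨V, rfl⟩, rfl⟩ := Submodule.mem_sup.1 hT
  clear hT
  apply add
  · induction U with
    | zero => simpa using right 0 (zero_mem _)
    | tmul a b =>
      rw [TensorProduct.map_tmul, Submodule.subtype_apply, Submodule.subtype_apply,
        ← F.coord_smul b b.2, ← TensorProduct.smul_tmul]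
      exact right _ (S.A₀.smul_mem _ a.2)
    | add V W hV hW => simpa only [map_add] using add _ _ hV hW
  · induction V with
    | zero => simpa using left 0 (zero_mem _)
    | tmul a b =>
      rw [TensorProduct.map_tmul, Submodule.subtype_apply, Submodule.subtype_apply,
        ← F.coord_smul a a.2, TensorProduct.smul_tmul]
      exact left _ (S.A₀.smul_mem _ b.2)
    | add V W hV hW => simpa only [map_add] using add _ _ hV hW

theorem rightSlice_coord_evenTensor (F : S.IsOddBasis y f) {T : A ⊗[K] A}
    (hT : T ∈ S.evenTensor) : rightSlice f T = f (rightSlice f T) • y := by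
  refine F.evenTensor_induction (fun a _ b hb => ?_) (fun r => ?_) (fun T U hT hU => ?_) hT
  · simp [F.coord_even b hb]
  · simp [F.coord_self]
  · simpa only [map_add, add_smul] using congrArg₂ (· + ·) hT hU

theorem leftSlice_coord_evenTensor (F : S.IsOddBasis y f) {T : A ⊗[K] A}
    (hT : T ∈ S.evenTensor) : leftSlice f T = f (rightSlice f T) • y := by
  refine F.evenTensor_induction (fun a ha b hb => ?_) (fun r => ?_) (fun T U hT hU => ?_) hT
  · simp [F.coord_even a ha, F.coord_even b hb]
  · simp [F.coord_self]
  · simpa only [map_add, add_smul] using congrArg₂ (· + ·) hT hU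

theorem rightSlice_leftCharacter_mem (F : S.IsOddBasis y f) {T : A ⊗[K] A}
    (hT : T ∈ S.evenTensor) : rightSlice χ T ∈ S.A₀ := by
  refine F.evenTensor_induction (fun a ha b _ => ?_) (fun r => ?_) (fun T U hT hU => ?_) hT
  · simpa using S.A₀.smul_mem _ ha
  · simp [F.leftCharacter_odd F.mem]
  · simpa only [map_add] using add_mem hT hU

theorem leftSlice_leftCharacter_mem (F : S.IsOddBasis y f) {T : A ⊗[K] A}
    (hT : T ∈ S.evenTensor) : leftSlice χ T ∈ S.A₀ := by
  refine F.evenTensor_induction (fun a _ b hb => ?_) (fun r => ?_) (fun T U hT hU => ?_) hT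
  · simpa using S.A₀.smul_mem _ hb
  · simp [F.leftCharacter_odd F.mem]
  · simpa only [map_add] using add_mem hT hU

theorem rightSlice_coord_oddTensor_mem (F : S.IsOddBasis y f) {T : A ⊗[K] A}
    (hT : T ∈ S.oddTensor) : rightSlice f T ∈ S.A₀ := by
  refine F.oddTensor_induction (fun a ha => ?_) (fun a ha => ?_) (fun T U hT hU => ?_) hT
  · simpa [F.coord_self] using ha
  · simp [F.coord_even a ha]
  · simpa only [map_add] using add_mem hT hU

theorem leftSlice_coord_oddTensor_mem (F : S.IsOddBasis y f) {T : A ⊗[K] A}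
    (hT : T ∈ S.oddTensor) : leftSlice f T ∈ S.A₀ := by
  refine F.oddTensor_induction (fun a ha => ?_) (fun a ha => ?_) (fun T U hT hU => ?_) hT
  · simp [F.coord_even a ha]
  · simpa [F.coord_self] using ha
  · simpa only [map_add] using add_mem hT hU

theorem oddTensor_eq (F : S.IsOddBasis y f) {T : A ⊗[K] A} (hT : T ∈ S.oddTensor) :
    T = rightSlice f T ⊗ₜ[K] y + y ⊗ₜ[K] leftSlice f T := by
  refine F.oddTensor_induction (fun a ha => ?_) (fun a ha => ?_) (fun T U hT hU => ?_) hT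
  · simp [F.coord_even a ha, F.coord_self]
  · simp [F.coord_even a ha, F.coord_self]
  · nth_rewrite 1 [hT, hU]
    simp only [map_add, TensorProduct.add_tmul, TensorProduct.tmul_add]
    abel

theorem rightSlice_coord_tmul_gen_add (F : S.IsOddBasis y f) (hb : b ∈ S.A₀) (a : A) :
    rightSlice f (a ⊗ₜ[K] y + y ⊗ₜ[K] b) = a := by
  simp [F.coord_even b hb, F.coord_self]

theorem leftSlice_coord_tmul_gen_add (F : S.IsOddBasis y f) (ha : a ∈ S.A₀) (b : A) :
    leftSlice f (a ⊗ₜ[K] y + y ⊗ₜ[K] b) = b := by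
  simp [F.coord_even a ha, F.coord_self]

theorem superBimul_evenTensor_tmul (F : S.IsOddBasis y f) {T : A ⊗[K] A}
    (hT : T ∈ S.evenTensor) {p q : A} (hp : p ∈ S.A₀) (hq : q ∈ S.A₀) :
    S.superBimul (T ⊗ₜ[K] (p ⊗ₜ[K] y + y ⊗ₜ[K] q)) =
      (rightSlice χ T * p - (f (rightSlice f T) * ψ q) • (y * y)) ⊗ₜ[K] y +
        y ⊗ₜ[K] (leftSlice χ T * q + (f (rightSlice f T) * ψ p) • (y * y)) := by
  refine F.evenTensor_induction (fun a ha b hb => ?_) (fun r => ?_) (fun T U hT hU => ?_) hT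
  · simp [TensorProduct.tmul_add, superBimul_tmul_of_left_mem_A₀ a hb, F.mul_gen ha, F.mul_gen hb,
      F.coord_even b hb, TensorProduct.smul_tmul]
  · rw [← TensorProduct.smul_tmul', map_smul, TensorProduct.tmul_add, map_add,
      superBimul_tmul_of_right_mem_A₀ y y hp, superBimul_tmul_of_mem_A₁ y F.mem F.mem,
      F.gen_mul hp, F.gen_mul hq]
    simp only [map_smul, rightSlice_tmul, leftSlice_tmul, F.leftCharacter_odd F.mem, F.coord_self,
      TensorProduct.tmul_smul, ← TensorProduct.smul_tmul', smul_eq_mul, zero_smul, smul_zero,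
      zero_mul, zero_sub, zero_add, one_smul, TensorProduct.neg_tmul]
    module
  · rw [TensorProduct.add_tmul, map_add, hT, hU]
    simp only [map_add, add_mul, add_smul, TensorProduct.add_tmul, TensorProduct.tmul_add,
      TensorProduct.sub_tmul]
    abel

theorem superBimul_tmul_evenTensor (F : S.IsOddBasis y f) {T : A ⊗[K] A}
    (hT : T ∈ S.evenTensor) {p q : A} (hp : p ∈ S.A₀) (hq : q ∈ S.A₀) :
    S.superBimul ((p ⊗ₜ[K] y + y ⊗ₜ[K] q) ⊗ₜ[K] T) =
      (p * rightSlice ψ T + (f (rightSlice f T) * χ q) • (y * y)) ⊗ₜ[K] y +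
        y ⊗ₜ[K] (q * leftSlice ψ T - (f (rightSlice f T) * χ p) • (y * y)) := by
  refine F.evenTensor_induction (fun a ha b hb => ?_) (fun r => ?_) (fun T U hT hU => ?_) hT
  · simp [TensorProduct.add_tmul, superBimul_tmul_of_right_mem_A₀ _ _ ha, F.gen_mul ha,
      F.gen_mul hb, F.coord_even b hb, TensorProduct.smul_tmul]
  · rw [TensorProduct.tmul_smul, map_smul, TensorProduct.add_tmul, map_add,
      superBimul_tmul_of_left_mem_A₀ y hq, superBimul_tmul_of_mem_A₁ p F.mem F.mem,
      F.mul_gen hp, F.mul_gen hq]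
    simp only [map_smul, rightSlice_tmul, leftSlice_tmul, F.rightCharacter_odd F.mem, F.coord_self,
      TensorProduct.tmul_smul, ← TensorProduct.smul_tmul', smul_eq_mul, zero_smul, smul_zero,
      mul_zero, zero_sub, zero_add, one_smul, TensorProduct.tmul_neg]
    module
  · rw [TensorProduct.tmul_add, map_add, hT, hU]
    simp only [map_add, mul_add, add_mul, add_smul, TensorProduct.add_tmul, TensorProduct.tmul_add,
      TensorProduct.tmul_sub]
    abel

end IsOddBasis

end SuperAlgebra

namespace SuperBialgebra

variable (B : SuperBialgebra K A)

/-- The translation operator `a ↦ u(a₍₂₎) a₍₁₎` of a functional `u`. -/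
noncomputable def rightTranslate (u : A →ₗ[K] K) : A →ₗ[K] A := rightSlice u ∘ₗ B.Δ

/-- The translation operator `a ↦ u(a₍₁₎) a₍₂₎` of a functional `u`. -/
noncomputable def leftTranslate (u : A →ₗ[K] K) : A →ₗ[K] A := leftSlice u ∘ₗ B.Δ

/-- When `f` is the coordinate along a generator `y` of the odd part, the functional sending an
even `a` to the coefficient of `y ⊗ y` in `Δ a`. -/
noncomputable def oddCoeff (f : A →ₗ[K] K) : A →ₗ[K] K := f ∘ₗ B.rightTranslate f

theorem Δ_rightTranslate (u : A →ₗ[K] K) (a : A) :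
    B.Δ (B.rightTranslate u a) =
      TensorProduct.map LinearMap.id (B.rightTranslate u) (B.Δ a) := by
  have slice_assoc (T : A ⊗[K] A) :
      TensorProduct.map LinearMap.id (rightSlice u)
        (TensorProduct.assoc K A A A (TensorProduct.map B.Δ LinearMap.id T)) =
      B.Δ (rightSlice u T) := by
    induction T with
    | zero => simp
    | add T U hT hU => simp only [map_add, hT, hU]
    | tmul a b =>
      rw [TensorProduct.map_tmul, rightSlice_tmul, map_smul]
      induction B.Δ a with
      | zero => simp
      | add V W hV hW => simp only [TensorProduct.add_tmul, map_add, hV, hW, smul_add]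
      | tmul c d => simp
  rw [rightTranslate, LinearMap.comp_apply, ← slice_assoc, B.coassoc, ← LinearMap.comp_apply,
    ← TensorProduct.map_comp, LinearMap.id_comp]

theorem Δ_leftTranslate (u : A →ₗ[K] K) (a : A) :
    B.Δ (B.leftTranslate u a) =
      TensorProduct.map (B.leftTranslate u) LinearMap.id (B.Δ a) := by
  have slice_assoc (T : A ⊗[K] A) :
      TensorProduct.map (leftSlice u) LinearMap.id
        ((TensorProduct.assoc K A A A).symm (TensorProduct.map LinearMap.id B.Δ T)) =
      B.Δ (leftSlice u T) := by
    induction T with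
    | zero => simp
    | add T U hT hU => simp only [map_add, hT, hU]
    | tmul a b =>
      rw [TensorProduct.map_tmul, leftSlice_tmul, map_smul]
      induction B.Δ b with
      | zero => simp
      | add V W hV hW => simp only [TensorProduct.tmul_add, map_add, hV, hW, smul_add]
      | tmul c d => simp [TensorProduct.smul_tmul']
  rw [leftTranslate, LinearMap.comp_apply, ← slice_assoc, ← B.coassoc,
    LinearEquiv.symm_apply_apply, ← LinearMap.comp_apply, ← TensorProduct.map_comp,
    LinearMap.id_comp]

theorem rightTranslate_rightTranslate (u v : A →ₗ[K] K) (a : A) :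
    B.rightTranslate u (B.rightTranslate v a) = B.rightTranslate (u ∘ₗ B.rightTranslate v) a := by
  have slice_map (T : A ⊗[K] A) :
      rightSlice u (TensorProduct.map LinearMap.id (B.rightTranslate v) T) =
        rightSlice (u ∘ₗ B.rightTranslate v) T := by
    induction T with
    | zero => simp
    | add T U hT hU => simp only [map_add, hT, hU]
    | tmul a b => simp
  exact (congrArg (rightSlice u) (B.Δ_rightTranslate v a)).trans (slice_map _)

theorem rightTranslate_ε (a : A) : B.rightTranslate B.ε a = a := B.counit_right a

theorem leftTranslate_ε (a : A) : B.leftTranslate B.ε a = a := B.counit_left a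

theorem rightTranslate_sub_smul (u v : A →ₗ[K] K) (r : K) (a : A) :
    B.rightTranslate (u - r • v) a = B.rightTranslate u a - r • B.rightTranslate v a := by
  simp [rightTranslate, rightSlice, LinearMap.lTensor_sub, LinearMap.lTensor_smul]

theorem rightTranslate_one (u : A →ₗ[K] K) : B.rightTranslate u 1 = u 1 • 1 := by
  simp [rightTranslate, B.Δ_one]

/-- `y` spans the odd part of `B` with coordinate `f`, and `Δ y = g ⊗ y + y ⊗ h` with `g`, `h`
even. -/
structure IsOddFrame (y : A) (f : A →ₗ[K] K) (g h : A) : Prop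
    extends B.toSuperAlgebra.IsOddBasis y f where
  left_mem : g ∈ B.A₀
  right_mem : h ∈ B.A₀
  Δ_gen : B.Δ y = g ⊗ₜ[K] y + y ⊗ₜ[K] h

end SuperBialgebra

namespace SuperAlgebra.IsOddBasis

variable {B : SuperBialgebra K A} {y : A} {f : A →ₗ[K] K} {a : A}

local notation "χ" => leftCharacter y f

theorem rightTranslate_coord (F : B.IsOddBasis y f) (ha : a ∈ B.A₀) :
    B.rightTranslate f a = B.oddCoeff f a • y :=
  F.rightSlice_coord_evenTensor (B.Δ_even a ha)

theorem leftTranslate_coord (F : B.IsOddBasis y f) (ha : a ∈ B.A₀) :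
    B.leftTranslate f a = B.oddCoeff f a • y :=
  F.leftSlice_coord_evenTensor (B.Δ_even a ha)

theorem rightTranslate_leftCharacter_mem (F : B.IsOddBasis y f) (ha : a ∈ B.A₀) :
    B.rightTranslate χ a ∈ B.A₀ :=
  F.rightSlice_leftCharacter_mem (B.Δ_even a ha)

theorem leftTranslate_leftCharacter_mem (F : B.IsOddBasis y f) (ha : a ∈ B.A₀) :
    B.leftTranslate χ a ∈ B.A₀ :=
  F.leftSlice_leftCharacter_mem (B.Δ_even a ha)

theorem isOddFrame (F : B.IsOddBasis y f) :
    B.IsOddFrame y f (B.rightTranslate f y) (B.leftTranslate f y) where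
  toIsOddBasis := F
  left_mem := F.rightSlice_coord_oddTensor_mem (B.Δ_odd y F.mem)
  right_mem := F.leftSlice_coord_oddTensor_mem (B.Δ_odd y F.mem)
  Δ_gen := F.oddTensor_eq (B.Δ_odd y F.mem)

variable {H : HopfSuperalgebra K A}

theorem antipode_gen (F : H.IsOddBasis y f) :
    H.antipode y = f (H.antipode y) • y :=
  (F.coord_smul _ (H.antipode_odd y F.mem)).symm

theorem antipode_gen_mul (F : H.IsOddBasis y f) (b : A) :
    H.antipode y * b = f (H.antipode y) • (y * b) := by
  nth_rewrite 1 [F.antipode_gen]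
  rw [smul_mul_assoc]

theorem mul_antipode_gen (F : H.IsOddBasis y f) (b : A) :
    b * H.antipode y = f (H.antipode y) • (b * y) := by
  nth_rewrite 1 [F.antipode_gen]
  rw [mul_smul_comm]

end SuperAlgebra.IsOddBasis

namespace SuperBialgebra

variable {B : SuperBialgebra K A} {y : A} {f : A →ₗ[K] K} {a g h : A}

namespace IsOddFrame

local notation "χ" => SuperAlgebra.leftCharacter y f
local notation "ψ" => SuperAlgebra.rightCharacter y f

theorem rightTranslate_gen (F : B.IsOddFrame y f g h) (u : A →ₗ[K] K) :
    B.rightTranslate u y = u y • g + u h • y := by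
  simp [rightTranslate, F.Δ_gen]

theorem leftTranslate_gen (F : B.IsOddFrame y f g h) (u : A →ₗ[K] K) :
    B.leftTranslate u y = u g • y + u y • h := by
  simp [leftTranslate, F.Δ_gen]

theorem rightTranslate_coord_gen (F : B.IsOddFrame y f g h) : B.rightTranslate f y = g := by
  simp [F.rightTranslate_gen, F.coord_self, F.coord_even h F.right_mem]

theorem leftTranslate_coord_gen (F : B.IsOddFrame y f g h) : B.leftTranslate f y = h := by
  simp [F.leftTranslate_gen, F.coord_self, F.coord_even g F.left_mem]

theorem ε_left (F : B.IsOddFrame y f g h) : B.ε g = 1 :=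
  F.smul_right_cancel <| by
    simpa [F.leftTranslate_gen, B.ε_odd y F.mem] using B.leftTranslate_ε y

theorem Δ_right (F : B.IsOddFrame y f g h) :
    B.Δ h = h ⊗ₜ[K] h + B.oddCoeff f g • y ⊗ₜ[K] y := by
  nth_rewrite 1 [← F.leftTranslate_coord_gen]
  rw [B.Δ_leftTranslate, F.Δ_gen, map_add, TensorProduct.map_tmul, TensorProduct.map_tmul,
    F.leftTranslate_coord_gen, F.leftTranslate_coord F.left_mem, add_comm]
  rfl

theorem oddCoeff_right (F : B.IsOddFrame y f g h) : B.oddCoeff f h = B.oddCoeff f g := by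
  simp [oddCoeff, rightTranslate, F.Δ_right, F.coord_even h F.right_mem, F.coord_self]

theorem Δ_left (F : B.IsOddFrame y f g h) :
    B.Δ g = g ⊗ₜ[K] g + B.oddCoeff f g • y ⊗ₜ[K] y := by
  nth_rewrite 1 [← F.rightTranslate_coord_gen]
  rw [B.Δ_rightTranslate, F.Δ_gen, map_add, TensorProduct.map_tmul, TensorProduct.map_tmul,
    F.rightTranslate_coord_gen, F.rightTranslate_coord F.right_mem, F.oddCoeff_right,
    TensorProduct.tmul_smul]
  rfl

theorem leftCharacter_smul_Δ_gen (F : B.IsOddFrame y f g h) (ha : a ∈ B.A₀) :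
    χ a • B.Δ y =
      (B.rightTranslate χ a * g - (B.oddCoeff f a * ψ h) • (y * y)) ⊗ₜ[K] y +
        y ⊗ₜ[K] (B.leftTranslate χ a * h + (B.oddCoeff f a * ψ g) • (y * y)) := by
  rw [← map_smul, ← F.mul_gen ha, B.Δ_mul, F.Δ_gen]
  exact F.superBimul_evenTensor_tmul (B.Δ_even a ha) F.left_mem F.right_mem

theorem rightCharacter_smul_Δ_gen (F : B.IsOddFrame y f g h) (ha : a ∈ B.A₀) :
    ψ a • B.Δ y =
      (g * B.rightTranslate ψ a + (B.oddCoeff f a * χ h) • (y * y)) ⊗ₜ[K] y +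
        y ⊗ₜ[K] (h * B.leftTranslate ψ a - (B.oddCoeff f a * χ g) • (y * y)) := by
  rw [← map_smul, ← F.gen_mul ha, B.Δ_mul, F.Δ_gen]
  exact F.superBimul_tmul_evenTensor (B.Δ_even a ha) F.left_mem F.right_mem

theorem rightTranslate_mul_left (F : B.IsOddFrame y f g h) (ha : a ∈ B.A₀) :
    B.rightTranslate χ a * g = χ a • g + (B.oddCoeff f a * ψ h) • (y * y) := by
  have hmem := add_mem (B.mul_mem₀₀ _ (F.leftTranslate_leftCharacter_mem ha) _ F.right_mem)
    (B.A₀.smul_mem (B.oddCoeff f a * ψ g) F.sq_mem)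
  have hslice := congrArg (rightSlice f) (F.leftCharacter_smul_Δ_gen ha)
  rw [F.rightSlice_coord_tmul_gen_add hmem, map_smul] at hslice
  exact sub_eq_iff_eq_add.1 (hslice.symm.trans (congrArg _ F.rightTranslate_coord_gen))

theorem leftTranslate_mul_right (F : B.IsOddFrame y f g h) (ha : a ∈ B.A₀) :
    B.leftTranslate χ a * h = χ a • h - (B.oddCoeff f a * ψ g) • (y * y) := by
  have hmem := sub_mem (B.mul_mem₀₀ _ (F.rightTranslate_leftCharacter_mem ha) _ F.left_mem)
    (B.A₀.smul_mem (B.oddCoeff f a * ψ h) F.sq_mem)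
  have hslice := congrArg (leftSlice f) (F.leftCharacter_smul_Δ_gen ha)
  rw [F.leftSlice_coord_tmul_gen_add hmem, map_smul] at hslice
  exact eq_sub_of_add_eq (hslice.symm.trans (congrArg _ F.leftTranslate_coord_gen))

theorem left_mul_rightTranslate (F : B.IsOddFrame y f g h) (hk : χ (y * y) ≠ 0)
    (ha : a ∈ B.A₀) :
    g * B.rightTranslate χ a = χ a • g - (B.oddCoeff f a * χ h) • (y * y) := by
  have hmem := sub_mem (B.mul_mem₀₀ _ F.right_mem _ (F.leftTranslate_leftCharacter_mem ha))
    (B.A₀.smul_mem (B.oddCoeff f a * χ g) F.sq_mem)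
  have hslice := congrArg (rightSlice f) (F.rightCharacter_smul_Δ_gen ha)
  rw [F.rightCharacter_eq_leftCharacter hk, F.rightSlice_coord_tmul_gen_add hmem, map_smul]
    at hslice
  exact eq_sub_of_add_eq (hslice.symm.trans (congrArg _ F.rightTranslate_coord_gen))

theorem right_mul_leftTranslate (F : B.IsOddFrame y f g h) (hk : χ (y * y) ≠ 0)
    (ha : a ∈ B.A₀) :
    h * B.leftTranslate χ a = χ a • h + (B.oddCoeff f a * χ g) • (y * y) := by
  have hmem := add_mem (B.mul_mem₀₀ _ F.left_mem _ (F.rightTranslate_leftCharacter_mem ha))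
    (B.A₀.smul_mem (B.oddCoeff f a * χ h) F.sq_mem)
  have hslice := congrArg (leftSlice f) (F.rightCharacter_smul_Δ_gen ha)
  rw [F.rightCharacter_eq_leftCharacter hk, F.leftSlice_coord_tmul_gen_add hmem, map_smul]
    at hslice
  exact sub_eq_iff_eq_add.1 (hslice.symm.trans (congrArg _ F.leftTranslate_coord_gen))

/-- Multiplying `a` by `y` on the two sides produces the `y²`-terms with opposite Koszul signs,
while their images under `χ` agree. -/
theorem leftCharacter_right_eq_zero [NeZero (2 : K)] (F : B.IsOddFrame y f g h)
    (hk : χ (y * y) ≠ 0) (ha : a ∈ B.A₀) (hs : B.oddCoeff f a ≠ 0) : χ h = 0 := by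
  have hR := F.rightTranslate_leftCharacter_mem ha
  have hleft := congrArg χ (F.rightTranslate_mul_left ha)
  have hright := congrArg χ (F.left_mul_rightTranslate hk ha)
  rw [F.leftCharacter_mul hR F.left_mem, F.rightCharacter_eq_leftCharacter hk] at hleft
  rw [F.leftCharacter_mul F.left_mem hR] at hright
  simp only [map_add, map_sub, map_smul, smul_eq_mul] at hleft hright
  have htwo : 2 * B.oddCoeff f a * χ (y * y) * χ h = 0 := by linear_combination hright - hleft
  simpa [two_ne_zero, hs, hk] using htwo

theorem leftCharacter_left_eq_zero [NeZero (2 : K)] (F : B.IsOddFrame y f g h)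
    (hk : χ (y * y) ≠ 0) (ha : a ∈ B.A₀) (hs : B.oddCoeff f a ≠ 0) : χ g = 0 := by
  have hL := F.leftTranslate_leftCharacter_mem ha
  have hleft := congrArg χ (F.leftTranslate_mul_right ha)
  have hright := congrArg χ (F.right_mul_leftTranslate hk ha)
  rw [F.leftCharacter_mul hL F.right_mem, F.rightCharacter_eq_leftCharacter hk] at hleft
  rw [F.leftCharacter_mul F.right_mem hL] at hright
  simp only [map_add, map_sub, map_smul, smul_eq_mul] at hleft hright
  have htwo : 2 * B.oddCoeff f a * χ (y * y) * χ g = 0 := by linear_combination hleft - hright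
  simpa [two_ne_zero, hs, hk] using htwo

section Hopf

variable {H : HopfSuperalgebra K A}

theorem leftCharacter_antipode_left (F : H.IsOddFrame y f g h) :
    χ (H.antipode g) + f (H.antipode y) * ψ h = 0 := by
  have hy := H.antipode_left y
  rw [F.Δ_gen, H.ε_odd y F.mem, map_zero, map_add, map_add, TensorProduct.map_tmul,
    TensorProduct.map_tmul, LinearMap.mul'_apply, LinearMap.mul'_apply, LinearMap.id_apply,
    LinearMap.id_apply, F.mul_gen (H.antipode_even g F.left_mem), F.antipode_gen_mul,
    F.gen_mul F.right_mem, smul_smul, ← add_smul] at hy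
  exact F.smul_right_cancel (hy.trans (zero_smul K y).symm)

theorem antipode_left_mul_left (F : H.IsOddFrame y f g h) :
    H.antipode g * g + (H.oddCoeff f g * f (H.antipode y)) • (y * y) = 1 := by
  have hg := H.antipode_left g
  rw [F.Δ_left, F.ε_left, map_one] at hg
  simpa [F.antipode_gen_mul, smul_smul] using hg

theorem left_mul_antipode_left (F : H.IsOddFrame y f g h) :
    g * H.antipode g + (H.oddCoeff f g * f (H.antipode y)) • (y * y) = 1 := by
  have hg := H.antipode_right g
  rw [F.Δ_left, F.ε_left, map_one] at hg
  simpa [F.mul_antipode_gen, smul_smul] using hg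

/-- `χ ∘ S` would be the convolution inverse of the character `χ` but for the `y ⊗ y` terms
of `Δ`. -/
theorem leftCharacter_antipode_comp_rightTranslate (F : H.IsOddFrame y f g h) :
    χ ∘ₗ H.antipode ∘ₗ H.rightTranslate χ =
      H.ε - (f (H.antipode y) * χ (y * y)) • H.oddCoeff f := by
  refine SuperAlgebra.linearMap_ext (S := H.toSuperAlgebra) (fun a ha => ?_) fun a ha => ?_
  · have slice_mul {T : A ⊗[K] A} (hT : T ∈ H.evenTensor) :
        χ (LinearMap.mul' K A (TensorProduct.map H.antipode LinearMap.id T)) =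
          χ (H.antipode (rightSlice χ T)) +
            f (H.antipode y) * χ (y * y) * f (rightSlice f T) := by
      refine F.evenTensor_induction (fun b hb c hc => ?_) (fun r => ?_) (fun T U hT hU => ?_) hT
      · simp [F.leftCharacter_mul (H.antipode_even b hb) hc, F.coord_even c hc, mul_comm]
      · simp [F.antipode_gen_mul, F.leftCharacter_odd F.mem, F.coord_self]
        ring
      · simp only [map_add, hT, hU]
        ring
    have hε := slice_mul (H.Δ_even a ha)
    rw [H.antipode_left, Algebra.algebraMap_eq_smul_one, map_smul, F.leftCharacter_one,
      smul_eq_mul, mul_one] at hε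
    exact eq_sub_of_add_eq hε.symm
  · rw [← F.coord_smul a ha]
    simp [F.rightTranslate_gen, F.leftCharacter_odd F.mem,
      F.leftCharacter_odd (H.antipode_odd y F.mem), H.ε_odd y F.mem,
      SuperBialgebra.oddCoeff, F.coord_even g F.left_mem, F.coord_self,
      F.coord_even h F.right_mem]

theorem smul_left_add_rightTranslate (F : H.IsOddFrame y f g h) (ha : a ∈ H.A₀) :
    (f (H.antipode y) * χ (y * y) * H.oddCoeff f a) • g +
      H.rightTranslate (χ ∘ₗ H.antipode) (H.rightTranslate χ a) = a := by
  have hcoeff : H.rightTranslate (H.oddCoeff f) a = H.oddCoeff f a • g := by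
    rw [oddCoeff, ← H.rightTranslate_rightTranslate, F.rightTranslate_coord ha, map_smul,
      F.rightTranslate_coord_gen, oddCoeff]
  rw [H.rightTranslate_rightTranslate, LinearMap.comp_assoc,
    F.leftCharacter_antipode_comp_rightTranslate, H.rightTranslate_sub_smul, H.rightTranslate_ε,
    hcoeff, smul_smul, add_sub_cancel]

theorem exists_left_mul_eq_one (F : H.IsOddFrame y f g h)
    (hdeg : H.oddCoeff f g * χ (y * y) = 0) : ∃ g', g * g' = 1 := by
  set u := (H.oddCoeff f g * f (H.antipode y)) • (y * y) with hu
  have husq : u * u = 0 := by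
    rw [hu, smul_mul_smul_comm, F.mul_sq F.sq_mem, smul_smul]
    convert zero_smul K (y * y)
    linear_combination H.oddCoeff f g * f (H.antipode y) ^ 2 * hdeg
  refine ⟨H.antipode g * (1 + u), ?_⟩
  rw [← mul_assoc, eq_sub_of_add_eq F.left_mul_antipode_left, ← hu]
  simp [sub_mul, mul_add, husq]

theorem rank_A₀_le_two (F : H.IsOddFrame y f g h)
    (hdeg : ∀ a ∈ H.A₀, H.oddCoeff f a * χ (y * y) = 0) : Module.rank K H.A₀ ≤ 2 := by
  obtain ⟨g', hg'⟩ := F.exists_left_mul_eq_one (hdeg g F.left_mem)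
  let R := H.rightTranslate (χ ∘ₗ H.antipode)
  have hspan : H.A₀ ≤ Submodule.span K {R 1, R (y * y * g')} := fun a ha => by
    have hR : H.rightTranslate χ a = χ a • 1 + (H.oddCoeff f a * ψ h) • (y * y * g') := by
      rw [← mul_one (H.rightTranslate χ a), ← hg', ← mul_assoc, F.rightTranslate_mul_left ha,
        add_mul, smul_mul_assoc, smul_mul_assoc]
    have hdecomp := F.smul_left_add_rightTranslate ha
    rw [mul_assoc, mul_comm (χ _), hdeg a ha, mul_zero, zero_smul, zero_add, hR, map_add,
      map_smul, map_smul] at hdecomp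
    exact Submodule.mem_span_pair.2 ⟨_, _, hdecomp⟩
  calc Module.rank K H.A₀ ≤ Module.rank K (Submodule.span K {R 1, R (y * y * g')}) :=
        Submodule.rank_mono hspan
    _ ≤ Cardinal.mk ({R 1, R (y * y * g')} : Set A) := rank_span_le _
    _ ≤ 2 := by
        simpa [one_add_one_eq_two] using Cardinal.mk_insert_le (s := {R (y * y * g')}) (a := R 1)

end Hopf

end IsOddFrame

variable (B) in
/-- An odd frame whose generator `y` is scaled so that `y³ = y`, and for which `g` and `h`
annihilate the odd part. -/
structure IsSplitFrame (y : A) (f : A →ₗ[K] K) (g h : A) : Prop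
    extends B.IsOddFrame y f g h where
  leftCharacter_sq : SuperAlgebra.leftCharacter y f (y * y) = 1
  leftCharacter_left : SuperAlgebra.leftCharacter y f g = 0
  leftCharacter_right : SuperAlgebra.leftCharacter y f h = 0

namespace IsSplitFrame

local notation "χ" => SuperAlgebra.leftCharacter y f
local notation "ψ" => SuperAlgebra.rightCharacter y f

theorem rightCharacter_eq (F : B.IsSplitFrame y f g h) : ψ = χ :=
  F.rightCharacter_eq_leftCharacter (F.leftCharacter_sq ▸ one_ne_zero)

theorem left_mul_gen (F : B.IsSplitFrame y f g h) : g * y = 0 := by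
  rw [F.mul_gen F.left_mem, F.leftCharacter_left, zero_smul]

theorem gen_mul_left (F : B.IsSplitFrame y f g h) : y * g = 0 := by
  rw [F.gen_mul F.left_mem, F.rightCharacter_eq, F.leftCharacter_left, zero_smul]

theorem Δ_sq (F : B.IsSplitFrame y f g h) :
    B.Δ (y * y) = (g * g) ⊗ₜ[K] (y * y) + (y * y) ⊗ₜ[K] (h * h) := by
  rw [B.Δ_mul, F.Δ_gen, TensorProduct.add_tmul, TensorProduct.tmul_add, TensorProduct.tmul_add,
    map_add, map_add, map_add,
    SuperAlgebra.superBimul_tmul_of_right_mem_A₀ g y F.left_mem y,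
    SuperAlgebra.superBimul_tmul_of_mem_A₁ g F.mem F.mem h,
    SuperAlgebra.superBimul_tmul_of_left_mem_A₀ y F.right_mem g y,
    SuperAlgebra.superBimul_tmul_of_left_mem_A₀ y F.right_mem y h, F.left_mul_gen,
    F.gen_mul_left]
  simp

theorem Δ_left_sq (F : B.IsSplitFrame y f g h) :
    B.Δ (g * g) =
      (g * g) ⊗ₜ[K] (g * g) - B.oddCoeff f g ^ 2 • (y * y) ⊗ₜ[K] (y * y) := by
  rw [B.Δ_mul, F.Δ_left, TensorProduct.add_tmul, TensorProduct.tmul_add, TensorProduct.tmul_add]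
  simp only [map_add, ← TensorProduct.smul_tmul', TensorProduct.tmul_smul, map_smul,
    SuperAlgebra.superBimul_tmul_of_left_mem_A₀ g F.left_mem,
    SuperAlgebra.superBimul_tmul_of_right_mem_A₀ y y F.left_mem,
    SuperAlgebra.superBimul_tmul_of_mem_A₁ y F.mem F.mem, F.left_mul_gen, F.gen_mul_left,
    TensorProduct.zero_tmul]
  module

theorem rightTranslate_sq (F : B.IsSplitFrame y f g h) (u : A →ₗ[K] K) :
    B.rightTranslate u (y * y) = u (y * y) • (g * g) + u (h * h) • (y * y) := by
  simp [rightTranslate, F.Δ_sq]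

theorem rightTranslate_leftCharacter_mul_left (F : B.IsSplitFrame y f g h) (ha : a ∈ B.A₀) :
    B.rightTranslate χ a * g = χ a • g := by
  rw [F.rightTranslate_mul_left ha, F.rightCharacter_eq, F.leftCharacter_right, mul_zero,
    zero_smul, add_zero]

theorem left_cube (F : B.IsSplitFrame y f g h) : g * g * g = g := by
  have hsq := F.rightTranslate_leftCharacter_mul_left F.sq_mem
  rwa [F.rightTranslate_sq, F.leftCharacter_mul F.right_mem F.right_mem, F.leftCharacter_right,
    F.leftCharacter_sq, mul_zero, zero_smul, add_zero, one_smul, one_smul] at hsq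

section Hopf

variable {H : HopfSuperalgebra K A}

theorem oddCoeff_mul_coord_antipode (F : H.IsSplitFrame y f g h) :
    H.oddCoeff f g * f (H.antipode y) = 1 := by
  have hχ := congrArg χ F.left_mul_antipode_left
  rwa [map_add, F.leftCharacter_mul F.left_mem (H.antipode_even g F.left_mem),
    F.leftCharacter_left, map_smul, F.leftCharacter_sq, F.leftCharacter_one, zero_mul, zero_add,
    smul_eq_mul, mul_one] at hχ

theorem left_mul_antipode_add_sq (F : H.IsSplitFrame y f g h) :
    g * H.antipode g + y * y = 1 := by
  simpa only [F.oddCoeff_mul_coord_antipode, one_smul] using F.left_mul_antipode_left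

theorem antipode_mul_left_add_sq (F : H.IsSplitFrame y f g h) :
    H.antipode g * g + y * y = 1 := by
  simpa only [F.oddCoeff_mul_coord_antipode, one_smul] using F.antipode_left_mul_left

theorem left_sq_add_gen_sq (F : H.IsSplitFrame y f g h) : g * g + y * y = 1 := by
  calc g * g + y * y = (H.antipode g * g + y * y) * (g * g) + y * y := by
        rw [F.antipode_mul_left_add_sq, one_mul]
    _ = H.antipode g * (g * g * g) + y * (y * g) * g + y * y := by noncomm_ring
    _ = 1 := by
        rw [F.left_cube, F.gen_mul_left, mul_zero, zero_mul, add_zero, F.antipode_mul_left_add_sq]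

theorem antipode_left_eq_self (F : H.IsSplitFrame y f g h) : H.antipode g = g := by
  have hSg : y * y * H.antipode g = 0 := by
    have hχ : χ (H.antipode g) = 0 := by
      simpa [F.rightCharacter_eq, F.leftCharacter_right] using F.leftCharacter_antipode_left
    rw [F.sq_mul (H.antipode_even g F.left_mem), F.rightCharacter_eq, hχ, zero_smul]
  calc H.antipode g = (g * g + y * y) * H.antipode g := by rw [F.left_sq_add_gen_sq, one_mul]
    _ = g * (g * H.antipode g + y * y) := by
      rw [add_mul, hSg, mul_add, ← mul_assoc g y y, F.left_mul_gen, zero_mul, mul_assoc]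
    _ = g := by rw [F.left_mul_antipode_add_sq, mul_one]

theorem right_eq_left (F : H.IsSplitFrame y f g h) : h = g := by
  have hχ : H.rightTranslate χ h = 0 := by
    simp [rightTranslate, F.Δ_right, F.leftCharacter_right, F.leftCharacter_odd F.mem]
  have hdecomp := F.smul_left_add_rightTranslate F.right_mem
  rwa [hχ, map_zero, add_zero, F.oddCoeff_right, F.leftCharacter_sq, mul_one, mul_comm,
    F.oddCoeff_mul_coord_antipode, one_smul, eq_comm] at hdecomp

/-- Compare the coefficients of `y² ⊗ y²` in `Δ (g²)` and `Δ (1 - y²)`, read off by `χ ⊗ χ`. -/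
theorem oddCoeff_left_sq (F : H.IsSplitFrame y f g h) : H.oddCoeff f g ^ 2 = -1 := by
  have hg : χ (g * g) = 0 := by
    rw [F.leftCharacter_mul F.left_mem F.left_mem, F.leftCharacter_left, zero_mul]
  have hleft : χ (H.rightTranslate χ (g * g)) = -H.oddCoeff f g ^ 2 := by
    simp [rightTranslate, F.Δ_left_sq, hg, F.leftCharacter_sq]
  have hright : χ (H.rightTranslate χ (g * g)) = 1 := by
    rw [eq_sub_of_add_eq F.left_sq_add_gen_sq, map_sub, H.rightTranslate_one, F.rightTranslate_sq,
      F.right_eq_left]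
    simp [hg, F.leftCharacter_one]
  linear_combination hleft - hright

theorem coord_antipode_gen (F : H.IsSplitFrame y f g h) :
    f (H.antipode y) = -H.oddCoeff f g := by
  linear_combination (-H.oddCoeff f g) * F.oddCoeff_mul_coord_antipode +
    f (H.antipode y) * F.oddCoeff_left_sq

theorem rightTranslate_leftCharacter (F : H.IsSplitFrame y f g h) (ha : a ∈ H.A₀) :
    H.rightTranslate χ a = χ a • (g * g) + χ (H.rightTranslate χ a) • (y * y) := by
  rw [← F.mul_sq (F.rightTranslate_leftCharacter_mem ha), ← smul_mul_assoc,
    ← F.rightTranslate_leftCharacter_mul_left ha, mul_assoc, ← mul_add, F.left_sq_add_gen_sq,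
    mul_one]

theorem A₀_eq_span (F : H.IsSplitFrame y f g h) :
    H.A₀ = Submodule.span K {1, g, g * g} := by
  set V := Submodule.span K {1, g, g * g} with hV
  have one_mem : 1 ∈ V := Submodule.subset_span (by simp)
  have left_mem : g ∈ V := Submodule.subset_span (by simp)
  have left_sq_mem : g * g ∈ V := Submodule.subset_span (by simp)
  have sq_mem : y * y ∈ V :=
    eq_sub_of_add_eq' F.left_sq_add_gen_sq ▸ sub_mem one_mem left_sq_mem
  have translate_sq_mem (u : A →ₗ[K] K) : H.rightTranslate u (y * y) ∈ V := by
    rw [F.rightTranslate_sq]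
    exact add_mem (V.smul_mem _ left_sq_mem) (V.smul_mem _ sq_mem)
  have translate_left_sq_mem (u : A →ₗ[K] K) : H.rightTranslate u (g * g) ∈ V := by
    rw [eq_sub_of_add_eq F.left_sq_add_gen_sq, map_sub, H.rightTranslate_one]
    exact sub_mem (V.smul_mem _ one_mem) (translate_sq_mem u)
  refine le_antisymm (fun a ha => ?_) (Submodule.span_le.2 ?_)
  · rw [← F.smul_left_add_rightTranslate ha, F.rightTranslate_leftCharacter ha, map_add, map_smul,
      map_smul]
    exact add_mem (V.smul_mem _ left_mem) (add_mem (V.smul_mem _ (translate_left_sq_mem _))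
      (V.smul_mem _ (translate_sq_mem _)))
  · rintro _ (rfl | rfl | rfl)
    exacts [H.one_mem, F.left_mem, H.mul_mem₀₀ _ F.left_mem _ F.left_mem]

end Hopf

end IsSplitFrame

end SuperBialgebra

namespace HopfSuperalgebra

variable (H : HopfSuperalgebra K A)

theorem exists_isSplitFrame [NeZero (2 : K)] (hsq : ∀ r : K, IsSquare r)
    (h0 : 2 < Module.rank K H.A₀) (h1 : Module.finrank K H.A₁ = 1) :
    ∃ y f g h, H.IsSplitFrame y f g h := by
  have exists_oddCoeff_mul_ne {y f} (F : H.IsOddBasis y f) :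
      ∃ a ∈ H.A₀, H.oddCoeff f a * SuperAlgebra.leftCharacter y f (y * y) ≠ 0 := by
    by_contra! hdeg
    exact h0.not_ge (F.isOddFrame.rank_A₀_le_two hdeg)
  obtain ⟨y, f, F⟩ := H.exists_isOddBasis h1
  obtain ⟨_, _, hne⟩ := exists_oddCoeff_mul_ne F
  obtain ⟨z, e, E, hz⟩ := F.exists_leftCharacter_sq_eq_one (right_ne_zero_of_mul hne) (hsq _)
  obtain ⟨a, ha, hne⟩ := exists_oddCoeff_mul_ne E
  have hs := left_ne_zero_of_mul hne
  have hk := right_ne_zero_of_mul hne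
  exact ⟨z, e, _, _, E.isOddFrame, hz, E.isOddFrame.leftCharacter_left_eq_zero hk ha hs,
    E.isOddFrame.leftCharacter_right_eq_zero hk ha hs⟩

end HopfSuperalgebra

theorem four_dim_hopf_superalgebra_even_dim_three_classification_general
    [NeZero (2 : K)] (hsq : ∀ r : K, IsSquare r) (H : HopfSuperalgebra K A)
    (h0 : 2 < Module.rank K H.A₀) (h1 : Module.finrank K H.A₁ = 1) :
    ∃ (x y : A) (α : K), α ^ 2 = -1 ∧
      x ∈ H.A₀ ∧ y ∈ H.A₁ ∧
      x * x + y * y = 1 ∧ x * y = 0 ∧ y * x = 0 ∧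
      H.A₀ = Submodule.span K {1, x, x * x} ∧
      H.A₁ = Submodule.span K {y} ∧
      H.Δ x = x ⊗ₜ[K] x - α • (y ⊗ₜ[K] y) ∧
      H.Δ y = x ⊗ₜ[K] y + y ⊗ₜ[K] x ∧
      H.ε x = 1 ∧ H.ε y = 0 ∧
      H.antipode x = x ∧ H.antipode y = α • y := by
  obtain ⟨y, f, g, h, F⟩ := H.exists_isSplitFrame hsq h0 h1
  obtain rfl := F.right_eq_left
  refine ⟨h, y, f (H.antipode y), ?_, F.left_mem, F.mem, F.left_sq_add_gen_sq, F.left_mul_gen,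
    F.gen_mul_left, F.A₀_eq_span, F.A₁_eq_span, ?_, F.Δ_gen, F.ε_left, H.ε_odd y F.mem,
    F.antipode_left_eq_self, F.antipode_gen⟩
  · rw [F.coord_antipode_gen, neg_sq, F.oddCoeff_left_sq]
  · rw [F.coord_antipode_gen, neg_smul, sub_neg_eq_add, F.Δ_left]

end OneDimensionalOddPart

/-- every non-trivial 4-dimensional Hopf superalgebra with 3-dimensional
even part is isomorphic to `H₅ = K[x,y]/(x² + y² - 1, xy)` with `x` even, `y` odd,
`Δ(x) = x ⊗ x - α y ⊗ y`, `Δ(y) = x ⊗ y + y ⊗ x`, `ε(x) = 1`, `ε(y) = 0`,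
`S(x) = x`, `S(y) = α y`, where `α` is a primitive fourth root of unity. -/
theorem four_dim_hopf_superalgebra_even_dim_three_classification
    {K A : Type*} [Field K] [IsAlgClosed K] [CharZero K] [Ring A] [Algebra K A]
    (H : HopfSuperalgebra K A)
    (hA : Module.finrank K A = 4)
    (h0 : Module.finrank K H.A₀ = 3)
    (hnt : H.A₁ ≠ ⊥) :
    ∃ (x y : A) (α : K), α ^ 2 = -1 ∧
      x ∈ H.A₀ ∧ y ∈ H.A₁ ∧
      x * x + y * y = 1 ∧ x * y = 0 ∧ y * x = 0 ∧
      H.A₀ = Submodule.span K {1, x, x * x} ∧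
      H.A₁ = Submodule.span K {y} ∧
      H.Δ x = x ⊗ₜ[K] x - α • (y ⊗ₜ[K] y) ∧
      H.Δ y = x ⊗ₜ[K] y + y ⊗ₜ[K] x ∧
      H.ε x = 1 ∧ H.ε y = 0 ∧
      H.antipode x = x ∧ H.antipode y = α • y := by
  have := Module.finite_of_finrank_pos (hA ▸ four_pos : 0 < Module.finrank K A)
  have hsum := Submodule.finrank_add_eq_of_isCompl H.compl
  exact four_dim_hopf_superalgebra_even_dim_three_classification_general
    IsAlgClosed.exists_eq_mul_self H (mod_cast Module.lt_rank_of_lt_finrank (n := 2) (by omega))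
    (by omega)
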